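/- Let I=(G,ω,𝒫,≺) be a feasible HCPP(l) instance with classes E_1 ≺ … ≺ E_k, and let Γ be the layer graph constructed from I. Then the weight of an optimal solution to I equals the weight of a least-weight layer path in Γ. Moreover, every layer path in Γ has the form J=(v_1, y_2², y_3³, …, y_k^k, v_{k+1}) with y_i^i ∈ V_i for i∈{2,…,k}, and concatenating the corresponding walks P[v,y²,1], P[y²,y³,2], …, P[y^k,v,k] yields a feasible solution W_J for I with ω(W_J)=ω_Γ(J). -/

import Mathlib

/-!
Cut a feasible walk at the first traversal of an edge outside `E_1 ∪ … ∪ E_i`, for each `i`. The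
precedence constraint forces the edges traversed before the `i`-th cut to be exactly
`E_1 ∪ … ∪ E_i`, so the piece between two consecutive cuts solves the corresponding problem
`R[u,v,i]`, and the vertices at the cuts form a layer path that weighs at most as much as the walk.
Conversely, the edges of the first `i` pieces of a concatenation along a layer path are exactly
`E_1 ∪ … ∪ E_i`, which yields coverage and precedence at once.
-/

namespace HCPPFormal

variable {V : Type} [DecidableEq V]

/-- The degree of a vertex in a multigraph given as a multiset of edges
(loops count twice, multiplicities are counted). -/
def mDeg (M : Multiset (Sym2 V)) (v : V) : ℕ :=
  (M.map fun e => if e = Sym2.diag v then 2 else if v ∈ e then 1 else 0).sum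

/-- The vertex set of the multigraph induced by a multiset of edges. -/
def mVerts (M : Multiset (Sym2 V)) : Set V := {v | ∃ e ∈ M, v ∈ e}

/-- Adjacency in the multigraph induced by a multiset of edges. -/
def mAdj (M : Multiset (Sym2 V)) (a b : V) : Prop := s(a, b) ∈ M

/-- The multigraph induced by a multiset of edges is connected. -/
def mConnected (M : Multiset (Sym2 V)) : Prop :=
  ∀ u ∈ mVerts M, ∀ v ∈ mVerts M, Relation.ReflTransGen (mAdj M) u v

/-- The list of edges traversed by a walk, given as its list of vertices. -/
def walkEdgeList (w : List V) : List (Sym2 V) :=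
  (w.zip w.tail).map fun p => s(p.1, p.2)

/-- The multiset of edges traversed by a walk (with multiplicities). -/
def walkEdges (w : List V) : Multiset (Sym2 V) :=
  (walkEdgeList w : Multiset (Sym2 V))

/-- The weight of a multiset of edges. -/
def mWeight (ω : Sym2 V → ℕ) (M : Multiset (Sym2 V)) : ℕ := (M.map ω).sum

/-- The weight of a walk. -/
def wWeight (ω : Sym2 V → ℕ) (w : List V) : ℕ := mWeight ω (walkEdges w)

/-- A multiset `M` of edges is a perfect matching on the vertex set `U`:
it is a set of pairwise vertex-disjoint non-loop edges
whose endpoints are exactly the vertices of `U`. -/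
def IsPerfectMatchingOn (M : Multiset (Sym2 V)) (U : Set V) : Prop :=
  M.Nodup ∧ (∀ e ∈ M, ¬ e.IsDiag) ∧
  (∀ e ∈ M, ∀ e' ∈ M, e ≠ e' → ∀ v : V, v ∈ e → v ∉ e') ∧
  mVerts M = U


/-- An HCPP(l) instance: an undirected graph on the vertex type `V` given by the
partition of its edge set into `k ≥ 1` nonempty classes `cls 0 ≺ cls 1 ≺ … ≺ cls (k-1)`,
linearly ordered by their indices. -/
structure HCPPl (V : Type) [DecidableEq V] : Type where
  k : ℕ
  hk : 1 ≤ k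
  cls : ℕ → Finset (Sym2 V)
  nonempty : ∀ i < k, (cls i).Nonempty
  disj : ∀ i < k, ∀ j < k, i ≠ j → Disjoint (cls i) (cls j)
  nodiag : ∀ i < k, ∀ e ∈ cls i, ¬ e.IsDiag

variable (I : HCPPl V)

/-- The edge set `E = E_1 ∪ … ∪ E_k` of the instance. -/
def edgesOf : Finset (Sym2 V) := (Finset.range I.k).biUnion I.cls

/-- The edge set `E_1 ∪ … ∪ E_{i+1}` of the first `i+1` classes (0-based index `i`). -/
def upTo (i : ℕ) : Finset (Sym2 V) := (Finset.range (i + 1)).biUnion I.cls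

/-- A feasible solution for the HCPP(l) instance `I`: a closed walk in `G`
traversing each edge at least once such that each edge of a class is traversed
only after all edges of all earlier classes have been traversed. -/
def Feasible (T : List V) : Prop :=
  T ≠ [] ∧ T.Chain' (fun a b => s(a, b) ∈ edgesOf I) ∧ T.head? = T.getLast? ∧
  (∀ e ∈ edgesOf I, e ∈ walkEdges T) ∧
  ∀ (q : ℕ) (hq : q < (walkEdgeList T).length) (i : ℕ), i < I.k →
    (walkEdgeList T).get ⟨q, hq⟩ ∈ I.cls i →
    ∀ j < i, ∀ e ∈ I.cls j,
      ∃ (p : ℕ) (hp : p < (walkEdgeList T).length),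
        p < q ∧ (walkEdgeList T).get ⟨p, hp⟩ = e

/-- A solution of the problem `R[u,v,i]`: a walk from `u` to `v` in
`⟨G⟩(E_1 ∪ … ∪ E_{i+1})` traversing all edges of the class `cls i` (0-based `i`). -/
def RSol (u v : V) (i : ℕ) (w : List V) : Prop :=
  w ≠ [] ∧ w.Chain' (fun a b => s(a, b) ∈ upTo I i) ∧
  w.head? = some u ∧ w.getLast? = some v ∧
  ∀ e ∈ I.cls i, e ∈ walkEdges w

/-- The problem `R[u,v,i]` has a solution. -/
def RFeas (u v : V) (i : ℕ) : Prop := ∃ w, RSol I u v i w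

/-- The optimal weight of a solution of `R[u,v,i]`,
i.e. the weight `ω(P[u,v,i])` of the arc `(u_i, v_{i+1})` of the layer graph `Γ`. -/
noncomputable def optR (ω : Sym2 V → ℕ) (u v : V) (i : ℕ) : ℕ :=
  sInf {c : ℕ | ∃ w, RSol I u v i w ∧ wWeight ω w = c}

/-- The vertices incident to the edges of `F`. -/
def vertsOf (F : Finset (Sym2 V)) : Set V := {v | ∃ e ∈ F, v ∈ e}

/-- A layer path in the layer graph `Γ`, encoded by the vertices `y 0, …, y I.k` of `G`
of which its vertices are copies: it leads from a vertex `v_1 ∈ V_1` to the copy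
`v_{k+1} ∈ V_{k+1}` of the same vertex of `V(E_1)`, its `i`-th vertex lies in the
layer `V_i`, and all its arcs are present in `Γ` (0-based layers `0, …, I.k`). -/
def IsLayerPath (y : ℕ → V) : Prop :=
  y 0 = y I.k ∧ y 0 ∈ vertsOf (I.cls 0) ∧
  (∀ i : ℕ, 0 < i → i < I.k →
    y i ∈ vertsOf (I.cls i) ∧ ∃ j < i, y i ∈ vertsOf (I.cls j)) ∧
  ∀ i < I.k, RFeas I (y i) (y (i + 1)) i

/-- The weight of a layer path in the layer graph `Γ`. -/
noncomputable def lpWeight (ω : Sym2 V → ℕ) (y : ℕ → V) : ℕ :=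
  ∑ i ∈ Finset.range I.k, optR I ω (y i) (y (i + 1)) i

/-- Concatenation of a list of walks, gluing the last vertex of each walk to the
(coinciding) first vertex of the next one. -/
def concatWalks : List (List V) → List V
  | [] => []
  | w :: ws => w ++ (concatWalks ws).tail

/-- The closed walk `W_J` obtained by concatenating the walks `P (y i) (y (i+1)) i`
along the layer path given by `y`. -/
def WJ (P : V → V → ℕ → List V) (y : ℕ → V) : List V :=
  concatWalks ((List.range I.k).map fun i => P (y i) (y (i + 1)) i)

lemma mem_take_of_isPrefix_of_getElem_notMem {α : Type*} {A L : List α} {q : ℕ} {x : α}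
    (hAL : A <+: L) (hq : q < L.length) (hLq : L[q] ∉ A) (hx : x ∈ A) : x ∈ L.take q := by
  have hlen : A.length ≤ q := by
    by_contra! hlt
    exact hLq (hAL.getElem hlt ▸ List.getElem_mem hlt)
  rw [List.prefix_iff_eq_take] at hAL
  exact List.take_subset_take_left L hlen (hAL ▸ hx)

section Walk

variable {α : Type} {a b : ℕ} {u v w : List α} {ws : List (List α)}

lemma length_walkEdgeList (w : List α) : (walkEdgeList w).length = w.length - 1 := by
  simp [walkEdgeList]

lemma length_eq_length_walkEdgeList_add_one (hw : w ≠ []) :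
    w.length = (walkEdgeList w).length + 1 := by
  have := List.length_pos_iff.2 hw
  rw [length_walkEdgeList]
  lia

lemma getElem_walkEdgeList (n : ℕ) (hn : n < (walkEdgeList w).length) :
    (walkEdgeList w)[n] =
      s(w[n]'(by grind [length_walkEdgeList]), w[n + 1]'(by grind [length_walkEdgeList])) := by
  simp [walkEdgeList]

lemma isChain_iff_forall_mem_walkEdgeList {p : Sym2 α → Prop} :
    w.IsChain (fun x y => p s(x, y)) ↔ ∀ e ∈ walkEdgeList w, p e := by
  simp only [List.isChain_iff_getElem, List.forall_mem_iff_getElem, getElem_walkEdgeList,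
    length_walkEdgeList, Nat.lt_sub_iff_add_lt]

lemma wWeight_eq_sum_map (ω : Sym2 α → ℕ) (w : List α) :
    wWeight ω w = ((walkEdgeList w).map ω).sum :=
  rfl

/-- The part of the walk `w` from its `a`-th to its `b`-th vertex, both included and counted
from `0`. -/
def subwalk (w : List α) (a b : ℕ) : List α := (w.take (b + 1)).drop a

lemma head?_subwalk (hab : a ≤ b) : (subwalk w a b).head? = w[a]? := by
  rw [subwalk, List.head?_drop, List.getElem?_take_of_lt (by lia)]

lemma getLast?_subwalk (hab : a ≤ b) (hb : b < w.length) :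
    (subwalk w a b).getLast? = w[b]? := by
  simp [subwalk, List.getLast?_drop, List.getLast?_take, hb, hab]

lemma walkEdgeList_subwalk :
    walkEdgeList (subwalk w a b) = ((walkEdgeList w).take b).drop a := by
  apply List.ext_getElem
  · simp only [subwalk, length_walkEdgeList, List.length_drop, List.length_take]
    lia
  · simp [subwalk, getElem_walkEdgeList, add_assoc]

lemma take_walkEdgeList_eq_append (hab : a ≤ b) :
    (walkEdgeList w).take b = (walkEdgeList w).take a ++ walkEdgeList (subwalk w a b) := by
  conv_lhs => rw [← List.take_append_drop a ((walkEdgeList w).take b)]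
  rw [List.take_take, min_eq_left hab, walkEdgeList_subwalk]

lemma sum_wWeight_subwalk (ω : Sym2 α → ℕ) {c : ℕ → ℕ} (hc : Monotone c) (h0 : c 0 = 0)
    (n : ℕ) :
    ∑ i ∈ Finset.range n, wWeight ω (subwalk w (c i) (c (i + 1))) =
      (((walkEdgeList w).take (c n)).map ω).sum := by
  induction n with
  | zero => simp [h0]
  | succ n ih =>
    rw [Finset.sum_range_succ, ih, take_walkEdgeList_eq_append (hc n.le_succ), List.map_append,
      List.sum_append, wWeight_eq_sum_map]

lemma head?_append_tail (h : u.getLast? = v.head?) : (u ++ v.tail).head? = u.head? := by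
  cases u <;> cases v <;> simp_all

lemma getLast?_append_tail (h : u.getLast? = v.head?) :
    (u ++ v.tail).getLast? = v.getLast? := by
  rcases v with _ | ⟨y, _ | ⟨z, v⟩⟩ <;> simp_all [List.getLast?_cons]

lemma walkEdgeList_append_tail (h : u.getLast? = v.head?) :
    walkEdgeList (u ++ v.tail) = walkEdgeList u ++ walkEdgeList v := by
  induction u with
  | nil => cases v <;> simp_all [walkEdgeList]
  | cons x u ih =>
    cases u with
    | nil => cases v <;> simp_all [walkEdgeList]
    | cons y u => simpa [walkEdgeList] using ih (by simpa using h)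

lemma head?_concatWalks (h : ws.IsChain fun u v => u.getLast? = v.head?) :
    (concatWalks ws).head? = ws.head?.bind List.head? := by
  induction ws with
  | nil => rfl
  | cons u ws ih =>
    cases ws with
    | nil => simp [concatWalks]
    | cons v ws =>
      rw [List.isChain_cons_cons] at h
      exact head?_append_tail (h.1.trans (ih h.2).symm)

lemma getLast?_eq_head?_concatWalks
    (h : (u :: v :: ws).IsChain fun u v => u.getLast? = v.head?) :
    u.getLast? = (concatWalks (v :: ws)).head? := by
  rw [List.isChain_cons_cons] at h
  exact h.1.trans (head?_concatWalks h.2).symm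

lemma getLast?_concatWalks (h : ws.IsChain fun u v => u.getLast? = v.head?) :
    (concatWalks ws).getLast? = ws.getLast?.bind List.getLast? := by
  induction ws with
  | nil => rfl
  | cons u ws ih =>
    cases ws with
    | nil => simp [concatWalks]
    | cons v ws =>
      rw [concatWalks, getLast?_append_tail (getLast?_eq_head?_concatWalks h), ih h.of_cons,
        List.getLast?_cons_cons]

lemma walkEdgeList_concatWalks (h : ws.IsChain fun u v => u.getLast? = v.head?) :
    walkEdgeList (concatWalks ws) = ws.flatMap walkEdgeList := by
  induction ws with
  | nil => rfl
  | cons u ws ih =>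
    cases ws with
    | nil => simp [concatWalks]
    | cons v ws =>
      rw [concatWalks, walkEdgeList_append_tail (getLast?_eq_head?_concatWalks h), ih h.of_cons,
        ← List.flatMap_cons]

lemma wWeight_concatWalks (ω : Sym2 α → ℕ) (h : ws.IsChain fun u v => u.getLast? = v.head?) :
    wWeight ω (concatWalks ws) = (ws.map (wWeight ω)).sum := by
  rw [wWeight_eq_sum_map, walkEdgeList_concatWalks h, List.map_flatMap, List.flatMap,
    List.sum_flatten, List.map_map]
  rfl

end Walk

section FirstClasses

variable {I} {i : ℕ} {e : Sym2 V} {T : List V}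

/-- The edge set `E_1 ∪ … ∪ E_i` of the first `i` classes. Both `edgesOf I` and `upTo I i` are
instances of it by definition: `firstClasses I I.k` and `firstClasses I (i + 1)`. -/
def firstClasses (I : HCPPl V) (i : ℕ) : Finset (Sym2 V) := (Finset.range i).biUnion I.cls

lemma mem_firstClasses : e ∈ firstClasses I i ↔ ∃ j < i, e ∈ I.cls j := by
  simp [firstClasses]

lemma firstClasses_mono (I : HCPPl V) : Monotone (firstClasses I) := fun _ _ h =>
  Finset.biUnion_subset_biUnion_of_subset_left _ (Finset.range_mono h)

lemma mem_firstClasses_succ : e ∈ firstClasses I (i + 1) ↔ e ∈ firstClasses I i ∨ e ∈ I.cls i := by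
  simp only [mem_firstClasses, Nat.lt_succ_iff_lt_or_eq, or_and_right, exists_or, exists_eq_left]

lemma notMem_firstClasses (hi : i < I.k) (he : e ∈ I.cls i) : e ∉ firstClasses I i := by
  rw [mem_firstClasses]
  rintro ⟨j, hj, hej⟩
  exact Finset.disjoint_left.1 (I.disj i hi j (hj.trans hi) hj.ne') he hej

lemma feasible_iff :
    Feasible I T ↔ T ≠ [] ∧ T.head? = T.getLast? ∧
      (∀ e, e ∈ walkEdgeList T ↔ e ∈ firstClasses I I.k) ∧
      ∀ (q : ℕ) (hq : q < (walkEdgeList T).length) (i : ℕ), i < I.k →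
        (walkEdgeList T)[q] ∈ I.cls i → ∀ e ∈ firstClasses I i, e ∈ (walkEdgeList T).take q := by
  have hchain : T.IsChain (fun a b => s(a, b) ∈ edgesOf I) ↔
      ∀ e ∈ walkEdgeList T, e ∈ firstClasses I I.k :=
    isChain_iff_forall_mem_walkEdgeList (p := (· ∈ edgesOf I))
  have hprec (q i : ℕ) :
      (∀ j < i, ∀ e ∈ I.cls j, ∃ (p : ℕ) (hp : p < (walkEdgeList T).length),
        p < q ∧ (walkEdgeList T).get ⟨p, hp⟩ = e) ↔
      ∀ e ∈ firstClasses I i, e ∈ (walkEdgeList T).take q := by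
    simp only [mem_firstClasses, List.mem_take_iff_getElem, lt_min_iff]
    exact ⟨fun h e ⟨j, hj, he⟩ =>
        let ⟨p, hp, hpq, hpe⟩ := h j hj e he
        ⟨p, ⟨hpq, hp⟩, hpe⟩,
      fun h j hj e he =>
        let ⟨p, ⟨hpq, hp⟩, hpe⟩ := h e ⟨j, hj, he⟩
        ⟨p, hp, hpq, hpe⟩⟩
  constructor
  · rintro ⟨hne, hedges, hclosed, hcover, hord⟩
    exact ⟨hne, hclosed, fun e => ⟨hchain.1 hedges e, hcover e⟩,
      fun q hq i hi hqi => (hprec q i).1 (hord q hq i hi hqi)⟩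
  · rintro ⟨hne, hclosed, hmem, hord⟩
    exact ⟨hne, hchain.2 fun e => (hmem e).1, hclosed, fun e => (hmem e).2,
      fun q hq i hi hqi => (hprec q i).2 (hord q hq i hi hqi)⟩

lemma rSol_iff {u v : V} {w : List V} :
    RSol I u v i w ↔ w.head? = some u ∧ w.getLast? = some v ∧
      (∀ e ∈ walkEdgeList w, e ∈ firstClasses I (i + 1)) ∧ ∀ e ∈ I.cls i, e ∈ walkEdgeList w := by
  have hchain : w.IsChain (fun a b => s(a, b) ∈ upTo I i) ↔
      ∀ e ∈ walkEdgeList w, e ∈ firstClasses I (i + 1) :=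
    isChain_iff_forall_mem_walkEdgeList (p := (· ∈ upTo I i))
  constructor
  · rintro ⟨-, hedges, hhead, hlast, hcover⟩
    exact ⟨hhead, hlast, hchain.1 hedges, hcover⟩
  · rintro ⟨hhead, hlast, hedges, hcover⟩
    have hne : w ≠ [] := by
      rintro rfl
      cases hhead
    exact ⟨hne, hchain.2 hedges, hhead, hlast, hcover⟩

end FirstClasses

section Concatenation

variable {I} {W : ℕ → List V} {y : ℕ → V}

lemma mem_flatMap_range_iff (hW : ∀ i < I.k, RSol I (y i) (y (i + 1)) i (W i)) {n : ℕ}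
    (hn : n ≤ I.k) {e : Sym2 V} :
    e ∈ (List.range n).flatMap (fun i => walkEdgeList (W i)) ↔ e ∈ firstClasses I n := by
  simp only [rSol_iff] at hW
  simp only [List.mem_flatMap, List.mem_range]
  constructor
  · rintro ⟨i, hi, he⟩
    exact firstClasses_mono I hi ((hW i (hi.trans_le hn)).2.2.1 e he)
  · rw [mem_firstClasses]
    rintro ⟨i, hi, he⟩
    exact ⟨i, hi, (hW i (hi.trans_le hn)).2.2.2 e he⟩

lemma isChain_getLast?_eq_head?_map_range (hW : ∀ i < I.k, RSol I (y i) (y (i + 1)) i (W i)) :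
    ((List.range I.k).map W).IsChain fun u v => u.getLast? = v.head? := by
  simp only [rSol_iff] at hW
  rw [List.isChain_map, List.isChain_range]
  intro i hi
  rw [(hW i (by lia)).2.1, (hW (i + 1) (by lia)).1]

lemma feasible_concatWalks (hy : y 0 = y I.k)
    (hW : ∀ i < I.k, RSol I (y i) (y (i + 1)) i (W i)) :
    Feasible I (concatWalks ((List.range I.k).map W)) := by
  have hk := I.hk
  have hchain := isChain_getLast?_eq_head?_map_range hW
  have hhead : (concatWalks ((List.range I.k).map W)).head? = some (y 0) := by
    simp [head?_concatWalks hchain, List.head?_range, (rSol_iff.1 (hW 0 hk)).1,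
      Nat.ne_of_gt hk]
  have hlast : (concatWalks ((List.range I.k).map W)).getLast? = some (y I.k) := by
    simp [getLast?_concatWalks hchain, List.getLast?_range, Nat.ne_of_gt hk,
      (rSol_iff.1 (hW (I.k - 1) (by lia))).2.1, Nat.sub_add_cancel hk]
  have hedges : walkEdgeList (concatWalks ((List.range I.k).map W)) =
      (List.range I.k).flatMap fun i => walkEdgeList (W i) := by
    rw [walkEdgeList_concatWalks hchain, List.flatMap_map]
  rw [feasible_iff, hedges, hhead, hlast, hy]
  refine ⟨?_, rfl, fun e => mem_flatMap_range_iff hW le_rfl, fun q hq i hi hqi e he => ?_⟩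
  · rintro h
    simp [h] at hhead
  · have hprefix : List.range i <+: List.range I.k :=
      List.prefix_iff_eq_take.2 (by simp [List.take_range, hi.le])
    refine mem_take_of_isPrefix_of_getElem_notMem (hprefix.flatMap _) hq ?_
      ((mem_flatMap_range_iff hW hi.le).2 he)
    rw [mem_flatMap_range_iff hW hi.le]
    exact notMem_firstClasses hi hqi

variable {ω : Sym2 V → ℕ} {P : V → V → ℕ → List V}

lemma wWeight_WJ (hW : ∀ i < I.k, RSol I (y i) (y (i + 1)) i (P (y i) (y (i + 1)) i))
    (hopt : ∀ i < I.k, wWeight ω (P (y i) (y (i + 1)) i) = optR I ω (y i) (y (i + 1)) i) :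
    wWeight ω (WJ I P y) = lpWeight I ω y := by
  rw [WJ, wWeight_concatWalks ω (isChain_getLast?_eq_head?_map_range hW), List.map_map, lpWeight]
  exact Finset.sum_congr rfl fun i hi => hopt i (Finset.mem_range.1 hi)

end Concatenation

section Cut

variable {I} {T : List V} {i : ℕ}

/-- The position in the walk `T` of the first traversal of an edge outside the first `i` classes,
or the number of traversals if there is none. This is also the position of the vertex of `T`
at which that traversal starts. -/
def cut (I : HCPPl V) (T : List V) (i : ℕ) : ℕ :=
  (walkEdgeList T).findIdx (· ∉ firstClasses I i)

lemma cut_zero (I : HCPPl V) (T : List V) : cut I T 0 = 0 := by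
  cases h : walkEdgeList T <;> simp [cut, firstClasses, h, List.findIdx_cons]

lemma cut_mono (I : HCPPl V) (T : List V) : Monotone (cut I T) := fun _ _ h =>
  List.findIdx_le_findIdx fun _ _ => by
    simpa using mt (@firstClasses_mono V _ I _ _ h _)

lemma cut_k (hT : Feasible I T) : cut I T I.k = (walkEdgeList T).length :=
  List.findIdx_eq_length_of_false fun e he => by
    simpa using ((feasible_iff.1 hT).2.2.1 e).1 he

lemma cut_le_length_walkEdgeList (I : HCPPl V) (T : List V) (i : ℕ) :
    cut I T i ≤ (walkEdgeList T).length :=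
  List.findIdx_le_length

lemma cut_lt_length (hT : T ≠ []) (i : ℕ) : cut I T i < T.length := by
  rw [length_eq_length_walkEdgeList_add_one hT, Nat.lt_succ_iff]
  exact cut_le_length_walkEdgeList I T i

lemma getElem_cut_notMem (h : cut I T i < (walkEdgeList T).length) :
    (walkEdgeList T)[cut I T i] ∉ firstClasses I i :=
  of_decide_eq_true (List.findIdx_getElem (w := h))

lemma mem_firstClasses_of_mem_take_cut {e : Sym2 V} (he : e ∈ (walkEdgeList T).take (cut I T i)) :
    e ∈ firstClasses I i := by
  obtain ⟨p, hp, rfl⟩ := List.mem_take_iff_getElem.1 he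
  simpa using List.not_of_lt_findIdx (lt_of_lt_of_le hp (min_le_left _ _))

lemma mem_take_cut_iff (hT : Feasible I T) (hi : i ≤ I.k) {e : Sym2 V} :
    e ∈ (walkEdgeList T).take (cut I T i) ↔ e ∈ firstClasses I i := by
  refine ⟨mem_firstClasses_of_mem_take_cut, fun he => ?_⟩
  obtain ⟨-, -, hmem, hprec⟩ := feasible_iff.1 hT
  rcases (cut_le_length_walkEdgeList I T i).lt_or_eq with hlt | heq
  · obtain ⟨j, hj, hej⟩ := mem_firstClasses.1 ((hmem _).1 (List.getElem_mem hlt))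
    have hij : i ≤ j := by
      by_contra! hji
      exact getElem_cut_notMem hlt (mem_firstClasses.2 ⟨j, hji, hej⟩)
    exact hprec _ hlt j hj hej e (firstClasses_mono I hij he)
  · rw [heq, List.take_length, hmem]
    exact firstClasses_mono I hi he

lemma mem_take_cut_succ (hT : Feasible I T) (hi : i < I.k) {e : Sym2 V} (he : e ∈ I.cls i) :
    e ∈ (walkEdgeList T).take (cut I T (i + 1)) :=
  (mem_take_cut_iff hT hi).2 (mem_firstClasses_succ.2 (.inr he))

lemma cut_lt_cut_succ (hT : Feasible I T) (hi : i < I.k) : cut I T i < cut I T (i + 1) := by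
  obtain ⟨e, he⟩ := I.nonempty i hi
  by_contra! hle
  exact notMem_firstClasses hi he (mem_firstClasses_of_mem_take_cut
    (List.take_subset_take_left _ hle (mem_take_cut_succ hT hi he)))

lemma cut_lt_length_walkEdgeList (hT : Feasible I T) (hi : i < I.k) :
    cut I T i < (walkEdgeList T).length :=
  (cut_lt_cut_succ hT hi).trans_le (cut_le_length_walkEdgeList I T _)

lemma getElem_cut_mem_cls (hT : Feasible I T) (hi : i < I.k) :
    (walkEdgeList T)[cut I T i]'(cut_lt_length_walkEdgeList hT hi) ∈ I.cls i := by
  have hlt := cut_lt_length_walkEdgeList hT hi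
  have hmem : (walkEdgeList T)[cut I T i] ∈ firstClasses I (i + 1) :=
    mem_firstClasses_of_mem_take_cut <| List.mem_take_iff_getElem.2
      ⟨_, lt_min (cut_lt_cut_succ hT hi) hlt, rfl⟩
  exact (mem_firstClasses_succ.1 hmem).resolve_left (getElem_cut_notMem hlt)

/-- The vertex of the walk `T` at its `i`-th cut. -/
def cutVertex (I : HCPPl V) (hT : T ≠ []) (i : ℕ) : V := T[cut I T i]'(cut_lt_length hT i)

lemma getElem?_cut (hT : T ≠ []) (i : ℕ) : T[cut I T i]? = some (cutVertex I hT i) :=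
  List.getElem?_eq_getElem (cut_lt_length hT i)

lemma cutVertex_zero_eq_cutVertex_k (hT : Feasible I T) :
    cutVertex I hT.1 0 = cutVertex I hT.1 I.k := by
  apply Option.some.inj
  rw [← getElem?_cut, ← getElem?_cut, cut_zero, cut_k hT, length_walkEdgeList,
    ← List.head?_eq_getElem?, ← List.getLast?_eq_getElem?]
  exact (feasible_iff.1 hT).2.1

lemma cutVertex_mem_vertsOf (hT : Feasible I T) (hi : i < I.k) :
    cutVertex I hT.1 i ∈ vertsOf (I.cls i) := by
  refine ⟨_, getElem_cut_mem_cls hT hi, ?_⟩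
  rw [getElem_walkEdgeList]
  exact Sym2.mem_mk_left _ _

lemma exists_lt_cutVertex_mem_vertsOf (hT : Feasible I T) (hi : i < I.k) (hi0 : 0 < i) :
    ∃ j < i, cutVertex I hT.1 i ∈ vertsOf (I.cls j) := by
  obtain ⟨n, hn⟩ : ∃ n, cut I T i = n + 1 := by
    have h01 := cut_lt_cut_succ hT I.hk
    exact Nat.exists_eq_add_one.2 (h01.pos.trans_le (cut_mono I T hi0))
  have hlt : n < (walkEdgeList T).length := by
    have := cut_lt_length_walkEdgeList hT hi
    lia
  have hmem : (walkEdgeList T)[n] ∈ firstClasses I i :=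
    mem_firstClasses_of_mem_take_cut <| List.mem_take_iff_getElem.2 ⟨n, by lia, rfl⟩
  obtain ⟨j, hj, hej⟩ := mem_firstClasses.1 hmem
  refine ⟨j, hj, _, hej, ?_⟩
  simp only [getElem_walkEdgeList, cutVertex, hn]
  exact Sym2.mem_mk_right _ _

lemma rSol_subwalk_cut (hT : Feasible I T) (hi : i < I.k) :
    RSol I (cutVertex I hT.1 i) (cutVertex I hT.1 (i + 1)) i
      (subwalk T (cut I T i) (cut I T (i + 1))) := by
  have hle := cut_mono I T i.le_succ
  rw [rSol_iff, head?_subwalk hle, getLast?_subwalk hle (cut_lt_length hT.1 _)]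
  refine ⟨getElem?_cut _ _, getElem?_cut _ _, fun e he => ?_, fun e he => ?_⟩
  · rw [walkEdgeList_subwalk] at he
    exact mem_firstClasses_of_mem_take_cut (List.mem_of_mem_drop he)
  · have hmem := mem_take_cut_succ hT hi he
    rw [take_walkEdgeList_eq_append hle, List.mem_append] at hmem
    exact hmem.resolve_left fun h => notMem_firstClasses hi he (mem_firstClasses_of_mem_take_cut h)

lemma isLayerPath_cutVertex (hT : Feasible I T) : IsLayerPath I (cutVertex I hT.1) :=
  ⟨cutVertex_zero_eq_cutVertex_k hT, cutVertex_mem_vertsOf hT I.hk,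
    fun _ hi0 hi => ⟨cutVertex_mem_vertsOf hT hi, exists_lt_cutVertex_mem_vertsOf hT hi hi0⟩,
    fun _ hi => ⟨_, rSol_subwalk_cut hT hi⟩⟩

lemma lpWeight_cutVertex_le (ω : Sym2 V → ℕ) (hT : Feasible I T) :
    lpWeight I ω (cutVertex I hT.1) ≤ wWeight ω T :=
  calc lpWeight I ω (cutVertex I hT.1)
    _ ≤ ∑ i ∈ Finset.range I.k, wWeight ω (subwalk T (cut I T i) (cut I T (i + 1))) :=
      Finset.sum_le_sum fun i hi =>
        Nat.sInf_le ⟨_, rSol_subwalk_cut hT (Finset.mem_range.1 hi), rfl⟩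
    _ = wWeight ω T := by
      rw [sum_wWeight_subwalk ω (cut_mono I T) (cut_zero I T), cut_k hT, List.take_length,
        wWeight_eq_sum_map]

end Cut

/-- Let `I` be a feasible HCPP(l) instance with classes `E_1 ≺ … ≺ E_k` and let `Γ` be the
layer graph constructed from `I` (whose arc `(u_i, v_{i+1})` has weight `ω(P[u,v,i])`,
where `P[u,v,i]` is an arbitrary fixed optimal solution of `R[u,v,i]`). Then the weight
of an optimal solution to `I` equals the weight of a least-weight layer path in `Γ`.
Moreover, every layer path in `Γ` has the form `J = (v_1, y_2², …, y_k^k, v_{k+1})`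
(which is encoded in `IsLayerPath`), and concatenating the corresponding walks
`P[v,y²,1], P[y²,y³,2], …, P[y^k,v,k]` yields a feasible solution `W_J` for `I`
with `ω(W_J) = ω_Γ(J)`. -/
theorem layer_graph_correct {V : Type} [DecidableEq V] (I : HCPPl V) (ω : Sym2 V → ℕ)
    (hfeas : ∃ T : List V, Feasible I T)
    (P : V → V → ℕ → List V)
    (hP : ∀ (u v : V) (i : ℕ), i < I.k → RFeas I u v i →
      RSol I u v i (P u v i) ∧ wWeight ω (P u v i) = optR I ω u v i) :
    (sInf {c : ℕ | ∃ T : List V, Feasible I T ∧ wWeight ω T = c} =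
      sInf {c : ℕ | ∃ y : ℕ → V, IsLayerPath I y ∧ lpWeight I ω y = c}) ∧
    ∀ y : ℕ → V, IsLayerPath I y →
      Feasible I (WJ I P y) ∧ wWeight ω (WJ I P y) = lpWeight I ω y := by
  have hWJ (y : ℕ → V) (hy : IsLayerPath I y) :
      Feasible I (WJ I P y) ∧ wWeight ω (WJ I P y) = lpWeight I ω y := by
    obtain ⟨hclosed, -, -, harc⟩ := hy
    have hW i (hi : i < I.k) := (hP _ _ i hi (harc i hi)).1
    exact ⟨feasible_concatWalks hclosed hW, wWeight_WJ hW fun i hi => (hP _ _ i hi (harc i hi)).2⟩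
  refine ⟨csInf_eq_csInf_of_forall_exists_le ?_ ?_, hWJ⟩
  · rintro _ ⟨T, hT, rfl⟩
    exact ⟨_, ⟨_, isLayerPath_cutVertex hT, rfl⟩, lpWeight_cutVertex_le ω hT⟩
  · rintro _ ⟨y, hy, rfl⟩
    exact ⟨_, ⟨_, (hWJ y hy).1, rfl⟩, (hWJ y hy).2.le⟩

end HCPPFormal
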